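/- arXiv:2411.18131 — 2 statements merged into one kernel-verified Lean document; each statement's English description precedes it below -/
import Mathlib

section
/- Let sfp(σ) denote the number of strong fixed points of σ, and let A(t,u) = Σ_{n≥0} t^n Σ_{σ∈K_n} u^{sfp(σ)}, a formal power series in t with coefficients in ℚ[u]. Then (1 + t(1+u+ut) + t(1−u)·A(t))·A(t,u) = (1+ut)(1+t)·A(t), where A(t) is regarded as an element of ℚ[u][[t]] via the constant-polynomial embedding. -/
/-- A permutation of `{0, …, n-1}` is a *king permutation* if consecutive entries
differ by more than 1 in absolute value. -/
def IsKing {n : ℕ} (σ : Equiv.Perm (Fin n)) : Prop :=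
  ∀ i : Fin n, ∀ h : (i : ℕ) + 1 < n,
    1 < |((σ ⟨(i : ℕ) + 1, h⟩ : ℕ) : ℤ) - ((σ i : ℕ) : ℤ)|

/-- `kingCount n = A_n`, the number of king permutations of length `n`. -/
noncomputable def kingCount (n : ℕ) : ℕ :=
  Nat.card {σ : Equiv.Perm (Fin n) // IsKing σ}

/-- `A(t)` regarded as a power series over `ℚ[u]` (constant-polynomial coefficients). -/
noncomputable def kingAu : PowerSeries (Polynomial ℚ) :=
  PowerSeries.mk fun n => (kingCount n : Polynomial ℚ)

/-- `i` is a *strong fixed point* of `σ`: all earlier entries are smaller and all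
later entries are larger. -/
def IsStrongFixedPoint {n : ℕ} (σ : Equiv.Perm (Fin n)) (i : Fin n) : Prop :=
  (∀ j : Fin n, j < i → σ j < σ i) ∧ (∀ j : Fin n, i < j → σ i < σ j)

/-- `sfp σ`, the number of strong fixed points of `σ`. -/
noncomputable def sfp {n : ℕ} (σ : Equiv.Perm (Fin n)) : ℕ :=
  Nat.card {i : Fin n // IsStrongFixedPoint σ i}

-- `A(t,u) = Σ_{n≥0} t^n Σ_{σ∈K_n} u^{sfp(σ)}`, as a power series in `t`
-- with coefficients in `ℚ[u]`.
open Classical in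
noncomputable def Atu : PowerSeries (Polynomial ℚ) :=
  PowerSeries.mk fun n =>
    ∑ σ : Equiv.Perm (Fin n),
      if IsKing σ then (Polynomial.X : Polynomial ℚ) ^ sfp σ else 0

/-- `u` viewed as a constant power series over `ℚ[u]`. -/
noncomputable def U : PowerSeries (Polynomial ℚ) :=
  PowerSeries.C (R := Polynomial ℚ) Polynomial.X

open Finset

/-- one-line notation as a total function on `ℕ` -/
def ev {n : ℕ} (σ : Equiv.Perm (Fin n)) (i : ℕ) : ℕ := if h : i < n then (σ ⟨i, h⟩ : ℕ) else i

theorem ev_of_lt {n : ℕ} (σ : Equiv.Perm (Fin n)) (i : ℕ) (h : i < n) : ev σ i = (σ ⟨i, h⟩ : ℕ) := by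
  simp [ev, h]

theorem ev_fin {n : ℕ} (σ : Equiv.Perm (Fin n)) (i : Fin n) : ev σ i = (σ i : ℕ) := by
  simp [ev]

theorem ev_lt {n : ℕ} (σ : Equiv.Perm (Fin n)) (i : ℕ) (h : i < n) : ev σ i < n := by
  rw [ev_of_lt σ i h]; exact (σ _).2

theorem ev_inj {n : ℕ} (σ : Equiv.Perm (Fin n)) {i j : ℕ} (hi : i < n) (hj : j < n)
    (h : ev σ i = ev σ j) : i = j := by
  rw [ev_of_lt σ i hi, ev_of_lt σ j hj] at h
  have := σ.injective (Fin.ext h)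
  simpa using this

theorem ev_ext {n : ℕ} (σ τ : Equiv.Perm (Fin n)) (h : ∀ i < n, ev σ i = ev τ i) : σ = τ := by
  ext i
  rw [← ev_fin, ← ev_fin]
  exact h i i.2

theorem exists_perm (n : ℕ) (f : ℕ → ℕ) (h1 : ∀ i < n, f i < n)
    (h2 : ∀ i < n, ∀ j < n, f i = f j → i = j) :
    ∃ σ : Equiv.Perm (Fin n), ∀ i < n, ev σ i = f i := by
  have hinj : Function.Injective (fun i : Fin n => (⟨f i, h1 i i.2⟩ : Fin n)) := by
    intro i j hij
    exact Fin.ext (h2 i i.2 j j.2 (by simpa using hij))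
  refine ⟨Equiv.ofBijective _ (Finite.injective_iff_bijective.mp hinj), ?_⟩
  intro i hi
  rw [ev_of_lt _ i hi]
  rfl

/-- strong fixed point, in terms of `ev` -/
def SF {n : ℕ} (σ : Equiv.Perm (Fin n)) (i : ℕ) : Prop :=
  (∀ j, j < i → ev σ j < ev σ i) ∧ (∀ j, i < j → j < n → ev σ i < ev σ j)

theorem isKing_iff {n : ℕ} (σ : Equiv.Perm (Fin n)) :
    IsKing σ ↔ ∀ i, i + 1 < n → ev σ i + 1 ≠ ev σ (i + 1) ∧ ev σ (i + 1) + 1 ≠ ev σ i := by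
  constructor
  · intro h i hi
    have := h ⟨i, by omega⟩ hi
    simp only [] at this
    rw [← ev_of_lt σ (i + 1) hi, ← ev_of_lt σ i (by omega), lt_abs] at this
    omega
  · intro h i hi
    have h1 := h i hi
    have h2 : ev σ i ≠ ev σ (i + 1) := fun h => by
      have := ev_inj σ i.2 hi h
      omega
    rw [← ev_of_lt σ (i + 1) hi, ← ev_fin σ i, lt_abs]
    omega

theorem sf_iff {n : ℕ} (σ : Equiv.Perm (Fin n)) (i : Fin n) :
    IsStrongFixedPoint σ i ↔ SF σ i := by
  constructor
  · rintro ⟨h1, h2⟩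
    refine ⟨fun j hj => ?_, fun j hj hjn => ?_⟩
    · rw [ev_fin, ev_of_lt σ j (by omega)]
      exact h1 ⟨j, by omega⟩ hj
    · rw [ev_fin, ev_of_lt σ j (by omega)]
      exact h2 ⟨j, by omega⟩ hj
  · rintro ⟨h1, h2⟩
    refine ⟨fun j hj => ?_, fun j hj => ?_⟩
    · have := h1 j hj
      rw [ev_fin, ev_fin] at this
      exact this
    · have := h2 j hj j.2
      rw [ev_fin, ev_fin] at this
      exact this

open Classical in
theorem sfp_eq {n : ℕ} (σ : Equiv.Perm (Fin n)) :
    sfp σ = ((range n).filter (SF σ)).card := by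
  unfold sfp
  rw [Nat.card_eq_fintype_card, Fintype.card_subtype]
  apply Finset.card_bij (fun (i : Fin n) _ => (i : ℕ))
  · intro i hi
    simp only [mem_filter, mem_univ, true_and, mem_range] at hi ⊢
    exact ⟨i.2, (sf_iff σ i).1 hi⟩
  · intro i _ j _ h
    exact Fin.ext h
  · intro j hj
    simp only [mem_filter, mem_range] at hj
    refine ⟨⟨j, hj.1⟩, ?_, rfl⟩
    simp only [mem_filter, mem_univ, true_and]
    exact (sf_iff σ _).2 hj.2

theorem sf_val {n : ℕ} (σ : Equiv.Perm (Fin n)) (i : ℕ) (hi : i < n) (h : SF σ i) :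
    ev σ i = i := by
  have hl := ev_lt σ i hi
  have h1 : ((range i).image (ev σ)).card = i := by
    rw [card_image_of_injOn, card_range]
    intro x hx y hy hxy
    simp only [coe_range, Set.mem_Iio] at hx hy
    exact ev_inj σ (by omega) (by omega) hxy
  have h2 : ((Ioo i n).image (ev σ)).card = n - i - 1 := by
    rw [card_image_of_injOn, Nat.card_Ioo]
    intro x hx y hy hxy
    simp only [coe_Ioo, Set.mem_Ioo] at hx hy
    exact ev_inj σ (by omega) (by omega) hxy
  have h3 : ((range i).image (ev σ)).card ≤ (range (ev σ i)).card := by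
    apply card_le_card
    intro x hx
    simp only [mem_image, mem_range] at hx ⊢
    obtain ⟨j, hj, rfl⟩ := hx
    exact h.1 j hj
  have h4 : ((Ioo i n).image (ev σ)).card ≤ (Ioo (ev σ i) n).card := by
    apply card_le_card
    intro x hx
    simp only [mem_image, mem_Ioo] at hx ⊢
    obtain ⟨j, hj, rfl⟩ := hx
    exact ⟨h.2 j hj.1 hj.2, ev_lt σ j hj.2⟩
  rw [h1, card_range] at h3
  rw [h2, Nat.card_Ioo] at h4
  omega

/-- the word of `α ⊕ 1 ⊕ β` -/
def dfun {a b : ℕ} (α : Equiv.Perm (Fin a)) (β : Equiv.Perm (Fin b)) (i : ℕ) : ℕ :=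
  if i < a then ev α i else if i = a then a else ev β (i - a - 1) + a + 1

theorem dsum_exists {a b : ℕ} (α : Equiv.Perm (Fin a)) (β : Equiv.Perm (Fin b)) :
    ∃ σ : Equiv.Perm (Fin (a + b + 1)), ∀ i < a + b + 1, ev σ i = dfun α β i := by
  apply exists_perm
  · intro i hi
    unfold dfun
    split_ifs with h1 h2
    · have := ev_lt α i h1
      omega
    · omega
    · have := ev_lt β (i - a - 1) (by omega)
      omega
  · intro i hi j hj h
    unfold dfun at h
    have A1 := fun h => ev_lt α i h
    have A2 := fun h => ev_lt α j h
    split_ifs at h with h1 h2 h3 h4 h5 h6 h7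
    all_goals first
      | omega
      | exact ev_inj α (by omega) (by omega) h
      | (have := ev_inj β (i := i - a - 1) (j := j - a - 1) (by omega) (by omega) (by omega)
         omega)

noncomputable def dsum {a b : ℕ} (α : Equiv.Perm (Fin a)) (β : Equiv.Perm (Fin b)) :
    Equiv.Perm (Fin (a + b + 1)) := (dsum_exists α β).choose

section
variable {a b : ℕ} (α : Equiv.Perm (Fin a)) (β : Equiv.Perm (Fin b))

theorem dsum_lo (i : ℕ) (h : i < a) : ev (dsum α β) i = ev α i := by
  rw [dsum, (dsum_exists α β).choose_spec i (by omega)]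
  simp [dfun, h]

theorem dsum_mid : ev (dsum α β) a = a := by
  rw [dsum, (dsum_exists α β).choose_spec a (by omega)]
  simp [dfun]

theorem dsum_hi (i : ℕ) (h : i < b) : ev (dsum α β) (a + 1 + i) = a + 1 + ev β i := by
  rw [dsum, (dsum_exists α β).choose_spec _ (by omega)]
  have h1 : ¬ (a + 1 + i < a) := by omega
  have h2 : ¬ (a + 1 + i = a) := by omega
  have h3 : a + 1 + i - a - 1 = i := by omega
  simp only [dfun, h1, h2, if_false, h3]
  omega

theorem forall_split (P : ℕ → Prop) : (∀ i, i < a + b + 1 → P i) ↔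
    (∀ i, i < a → P i) ∧ P a ∧ ∀ i, i < b → P (a + 1 + i) := by
  constructor
  · intro h
    exact ⟨fun i hi => h i (by omega), h a (by omega), fun i hi => h _ (by omega)⟩
  · rintro ⟨h1, h2, h3⟩ i hi
    rcases lt_trichotomy i a with h | h | h
    · exact h1 i h
    · exact h ▸ h2
    · have := h3 (i - (a + 1)) (by omega)
      rwa [show a + 1 + (i - (a + 1)) = i by omega] at this

theorem dsum_sf_mid : SF (dsum α β) a := by
  refine ⟨fun j hj => ?_, fun j hj hjn => ?_⟩
  · rw [dsum_lo α β j hj, dsum_mid]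
    exact ev_lt α j hj
  · obtain ⟨k, rfl⟩ : ∃ k, j = a + 1 + k := ⟨j - (a + 1), by omega⟩
    rw [dsum_hi α β k (by omega), dsum_mid]
    omega

theorem dsum_sf_lo (i : ℕ) (hi : i < a) : SF (dsum α β) i ↔ SF α i := by
  constructor
  · rintro ⟨h1, h2⟩
    refine ⟨fun j hj => ?_, fun j hj hjn => ?_⟩
    · have := h1 j hj
      rwa [dsum_lo α β i hi, dsum_lo α β j (by omega)] at this
    · have := h2 j hj (by omega)
      rwa [dsum_lo α β i hi, dsum_lo α β j (by omega)] at this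
  · rintro ⟨h1, h2⟩
    refine ⟨fun j hj => ?_, ?_⟩
    · have := h1 j hj
      rwa [dsum_lo α β i hi, dsum_lo α β j (by omega)]
    · have hl := ev_lt α i hi
      intro j hj hjn
      rw [dsum_lo α β i hi]
      rcases lt_trichotomy j a with h | h | h
      · rw [dsum_lo α β j h]
        exact h2 j hj h
      · rw [h, dsum_mid]
        exact hl
      · obtain ⟨k, rfl⟩ : ∃ k, j = a + 1 + k := ⟨j - (a + 1), by omega⟩
        rw [dsum_hi α β k (by omega)]
        omega

theorem dsum_sf_hi (i : ℕ) (hi : i < b) : SF (dsum α β) (a + 1 + i) ↔ SF β i := by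
  constructor
  · rintro ⟨h1, h2⟩
    refine ⟨fun j hj => ?_, fun j hj hjn => ?_⟩
    · have := h1 (a + 1 + j) (by omega)
      rw [dsum_hi α β i hi, dsum_hi α β j (by omega)] at this
      omega
    · have := h2 (a + 1 + j) (by omega) (by omega)
      rw [dsum_hi α β i hi, dsum_hi α β j (by omega)] at this
      omega
  · rintro ⟨h1, h2⟩
    refine ⟨fun j hj => ?_, fun j hj hjn => ?_⟩
    · rw [dsum_hi α β i hi]
      rcases lt_trichotomy j a with h | h | h
      · rw [dsum_lo α β j h]
        have := ev_lt α j h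
        omega
      · rw [h, dsum_mid]
        omega
      · obtain ⟨k, rfl⟩ : ∃ k, j = a + 1 + k := ⟨j - (a + 1), by omega⟩
        rw [dsum_hi α β k (by omega)]
        have := h1 k (by omega)
        omega
    · obtain ⟨k, rfl⟩ : ∃ k, j = a + 1 + k := ⟨j - (a + 1), by omega⟩
      rw [dsum_hi α β k (by omega), dsum_hi α β i hi]
      have := h2 k (by omega) (by omega)
      omega

open Classical in
theorem dsum_sfp : sfp (dsum α β) = sfp α + 1 + sfp β := by
  rw [sfp_eq, sfp_eq, sfp_eq, card_filter, card_filter, card_filter,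
    show range (a + b + 1) = range ((a + 1) + b) from congrArg range (by omega), sum_range_add, sum_range_succ]
  congr 1
  · congr 1
    · apply sum_congr rfl
      intro i hi
      simp only [mem_range] at hi
      simp only [dsum_sf_lo α β i hi]
    · simp only [dsum_sf_mid α β, if_true]
  · apply sum_congr rfl
    intro i hi
    simp only [mem_range] at hi
    simp only [dsum_sf_hi α β i hi]

def NoEnd {n : ℕ} (σ : Equiv.Perm (Fin n)) : Prop := ∀ i, i + 1 = n → ev σ i ≠ i
def NoStart {n : ℕ} (σ : Equiv.Perm (Fin n)) : Prop := 0 < n → ev σ 0 ≠ 0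

theorem dsum_king : IsKing (dsum α β) ↔ (IsKing α ∧ NoEnd α) ∧ (IsKing β ∧ NoStart β) := by
  rw [isKing_iff, isKing_iff, isKing_iff]
  constructor
  · intro h
    refine ⟨⟨fun i hi => ?_, fun i hi he => ?_⟩, fun i hi => ?_, fun hb he => ?_⟩
    · have := h i (by omega)
      rwa [dsum_lo α β i (by omega), dsum_lo α β (i + 1) hi] at this
    · have := (h i (by omega)).1
      rw [dsum_lo α β i (by omega), hi, dsum_mid] at this
      omega
    · have := h (a + 1 + i) (by omega)
      rw [dsum_hi α β i (by omega), add_assoc (a + 1) i 1, dsum_hi α β (i + 1) hi] at this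
      omega
    · have := (h a (by omega)).1
      have h2 := dsum_hi α β 0 hb
      rw [add_zero] at h2
      rw [dsum_mid, h2] at this
      omega
  · rintro ⟨⟨h1, h2⟩, h3, h4⟩ i hi
    rcases lt_trichotomy i a with h | h | h
    · rcases lt_or_eq_of_le (Nat.succ_le_of_lt h) with h' | h'
      · rw [dsum_lo α β i h, dsum_lo α β (i + 1) h']
        exact h1 i h'
      · have h5 := h2 i h'
        have h6 := ev_lt α i h
        have : i + 1 = a := h'
        rw [dsum_lo α β i h, this, dsum_mid]
        omega
    · have h5 := h4 (by omega)
      have h2 := dsum_hi α β 0 (by omega)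
      rw [add_zero] at h2
      rw [h, dsum_mid, h2]
      omega
    · obtain ⟨k, rfl⟩ : ∃ k, i = a + 1 + k := ⟨i - (a + 1), by omega⟩
      rw [dsum_hi α β k (by omega), add_assoc (a + 1) k 1, dsum_hi α β (k + 1) (by omega)]
      have := h3 k (by omega)
      omega
end

theorem dsum_inj {a b : ℕ} (α α' : Equiv.Perm (Fin a)) (β β' : Equiv.Perm (Fin b))
    (h : dsum α β = dsum α' β') : α = α' ∧ β = β' := by
  constructor
  · apply ev_ext
    intro i hi
    rw [← dsum_lo α β i hi, h, dsum_lo α' β' i hi]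
  · apply ev_ext
    intro i hi
    have h1 := dsum_hi α β i hi
    rw [h, dsum_hi α' β' i hi] at h1
    omega

theorem dsum_surj {a b : ℕ} (σ : Equiv.Perm (Fin (a + b + 1))) (h : SF σ a) :
    ∃ (α : Equiv.Perm (Fin a)) (β : Equiv.Perm (Fin b)), dsum α β = σ := by
  have hv := sf_val σ a (by omega) h
  obtain ⟨h1, h2⟩ := h
  rw [hv] at h1 h2
  obtain ⟨α, hα⟩ := exists_perm a (ev σ) h1
    (fun i hi j hj hij => ev_inj σ (by omega) (by omega) hij)
  have h2' : ∀ i < b, a < ev σ (a + 1 + i) := fun i hi => h2 _ (by omega) (by omega)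
  obtain ⟨β, hβ⟩ := exists_perm b (fun i => ev σ (a + 1 + i) - (a + 1))
    (fun i hi => by
      have := h2' i hi
      have := ev_lt σ (a + 1 + i) (by omega)
      omega)
    (fun i hi j hj hij => by
      have := h2' i hi
      have := h2' j hj
      have := ev_inj σ (i := a + 1 + i) (j := a + 1 + j) (by omega) (by omega) (by
        omega)
      omega)
  refine ⟨α, β, ev_ext _ _ ?_⟩
  rw [forall_split]
  refine ⟨fun i hi => ?_, ?_, fun i hi => ?_⟩
  · rw [dsum_lo α β i hi, hα i hi]
  · rw [dsum_mid, hv]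
  · have := h2' i hi
    rw [dsum_hi α β i hi, hβ i hi]
    omega

open Classical in
theorem sum_sf {M : Type*} [AddCommMonoid M] (a b : ℕ) (f : Equiv.Perm (Fin (a + b + 1)) → M) :
    (∑ σ, if SF σ a then f σ else 0)
      = ∑ p : Equiv.Perm (Fin a) × Equiv.Perm (Fin b), f (dsum p.1 p.2) := by
  rw [← sum_filter]
  symm
  apply sum_bij (fun p _ => dsum p.1 p.2)
  · intro p _
    simp only [mem_filter, mem_univ, true_and]
    exact dsum_sf_mid _ _
  · rintro ⟨p1, p2⟩ _ ⟨q1, q2⟩ _ h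
    obtain ⟨h1, h2⟩ := dsum_inj _ _ _ _ h
    exact Prod.ext h1 h2
  · intro σ hσ
    simp only [mem_filter, mem_univ, true_and] at hσ
    obtain ⟨α, β, h⟩ := dsum_surj σ hσ
    exact ⟨(α, β), mem_univ _, h⟩
  · intro _ _
    rfl

open Polynomial in
open Classical in
/-- weight sum of king permutations of length `n` -/
noncomputable def gc (v : ℚ[X]) (n : ℕ) : ℚ[X] :=
  ∑ σ : Equiv.Perm (Fin n), if IsKing σ then v ^ sfp σ else 0

open Polynomial in
open Classical in
/-- the same, over those not starting with the minimum -/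
noncomputable def rc (v : ℚ[X]) (n : ℕ) : ℚ[X] :=
  ∑ σ : Equiv.Perm (Fin n), if IsKing σ ∧ NoStart σ then v ^ sfp σ else 0

theorem sf_last {n : ℕ} (σ : Equiv.Perm (Fin n)) (i : ℕ) (hi : i + 1 = n) (h : ev σ i = i) :
    SF σ i := by
  refine ⟨fun j hj => ?_, fun j hj hjn => by omega⟩
  have h1 := ev_lt σ j (by omega)
  have h2 : ev σ j ≠ ev σ i := fun h' => by
    have := ev_inj σ (by omega) (by omega) h'
    omega
  omega

theorem sf_first {n : ℕ} (σ : Equiv.Perm (Fin n)) (hn : 0 < n) : SF σ 0 ↔ ev σ 0 = 0 := by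
  constructor
  · exact sf_val σ 0 hn
  · intro h
    refine ⟨fun j hj => by omega, fun j hj hjn => ?_⟩
    have h2 : ev σ j ≠ ev σ 0 := fun h' => by
      have := ev_inj σ (by omega) (by omega) h'
      omega
    omega

theorem sfp_zero_iff {n : ℕ} (σ : Equiv.Perm (Fin n)) : sfp σ = 0 ↔ ∀ i < n, ¬ SF σ i := by
  classical
  rw [sfp_eq, card_eq_zero, filter_eq_empty_iff]
  simp only [mem_range]

theorem noEnd_of_sfp {n : ℕ} (σ : Equiv.Perm (Fin n)) (h : sfp σ = 0) : NoEnd σ := by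
  intro i hi he
  exact (sfp_zero_iff σ).1 h i (by omega) (sf_last σ i hi he)

open Polynomial in
open Classical in
theorem first_sum (v : ℚ[X]) (a b m : ℕ) (hm : m = a + b + 1) :
    (∑ σ : Equiv.Perm (Fin m), if SF σ a then
      (if IsKing σ ∧ ∀ j < a, ¬ SF σ j then v ^ sfp σ else 0) else 0)
      = v * (gc 0 a * rc v b) := by
  subst hm
  rw [sum_sf, gc, rc, sum_mul_sum, ← univ_product_univ, sum_product, mul_sum]
  apply sum_congr rfl
  intro α _
  rw [mul_sum]
  apply sum_congr rfl
  intro β _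
  have e : (∀ j < a, ¬ SF (dsum α β) j) ↔ sfp α = 0 := by
    rw [sfp_zero_iff]
    exact forall_congr' fun j => forall_congr' fun hj => by rw [dsum_sf_lo α β j hj]
  simp only [e, dsum_king, dsum_sfp]
  by_cases h0 : sfp α = 0
  · have h1 := noEnd_of_sfp α h0
    by_cases h2 : IsKing α <;> by_cases h3 : IsKing β ∧ NoStart β <;>
      simp [h0, h1, h2, h3]
    ring
  · simp [h0]

open Polynomial in
open Classical in
theorem gc_succ (v : ℚ[X]) (n : ℕ) :
    gc v (n + 1) = gc 0 (n + 1) + ∑ p ∈ antidiagonal n, v * (gc 0 p.1 * rc v p.2) := by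
  have h1 : ∀ p ∈ antidiagonal n, v * (gc 0 p.1 * rc v p.2) =
      ∑ σ : Equiv.Perm (Fin (n + 1)), if SF σ p.1 then
      (if IsKing σ ∧ ∀ j < p.1, ¬ SF σ j then v ^ sfp σ else 0) else 0 := by
    intro p hp
    rw [HasAntidiagonal.mem_antidiagonal] at hp
    rw [first_sum v p.1 p.2 (n + 1) (by omega)]
  rw [sum_congr rfl h1, sum_comm, gc, gc, ← sum_add_distrib]
  apply sum_congr rfl
  intro σ _
  rw [Finset.Nat.sum_antidiagonal_eq_sum_range_succ_mk]
  simp only []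
  by_cases hk : IsKing σ
  swap
  · simp [hk]
  simp only [hk, if_true, true_and]
  by_cases h0 : sfp σ = 0
  · rw [sum_eq_zero]
    · simp [h0]
    · intro i hi
      rw [if_neg ((sfp_zero_iff σ).1 h0 i (by simpa using hi))]
  · have hex : ∃ i, i < n + 1 ∧ SF σ i := by
      by_contra hc
      push Not at hc
      exact h0 ((sfp_zero_iff σ).2 hc)
    rw [zero_pow h0, zero_add]
    have hs := Nat.find_spec hex
    rw [sum_eq_single (Nat.find hex)]
    · rw [if_pos hs.2, if_pos]
      intro j hj hsf
      exact Nat.find_min hex hj ⟨by omega, hsf⟩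
    · intro i hi hne
      by_cases hsf : SF σ i
      · rw [if_pos hsf, if_neg]
        intro hall
        have hle := Nat.find_min' hex ⟨by simpa using hi, hsf⟩
        exact hall _ (by omega) hs.2
      · rw [if_neg hsf]
    · intro hni
      exact absurd (mem_range.2 hs.1) hni

theorem sfp_zero_len (σ : Equiv.Perm (Fin 0)) : sfp σ = 0 := by
  rw [sfp_zero_iff]
  intro i hi
  omega

theorem king_zero (σ : Equiv.Perm (Fin 0)) : IsKing σ := fun i => i.elim0

open Polynomial in
theorem gc_zero (v : ℚ[X]) : gc v 0 = 1 := by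
  simp [gc, sfp_zero_len, king_zero]

open Polynomial in
theorem rc_zero (v : ℚ[X]) : rc v 0 = 1 := by
  simp [rc, sfp_zero_len, king_zero, NoStart]

open Polynomial in
open Classical in
theorem rc_succ (v : ℚ[X]) (n : ℕ) : gc v (n + 1) = rc v (n + 1) + v * rc v n := by
  have h := first_sum v 0 n (n + 1) (by omega)
  rw [gc_zero, one_mul] at h
  rw [← h, gc, rc, ← sum_add_distrib]
  apply sum_congr rfl
  intro σ _
  have e := sf_first σ (Nat.succ_pos n)
  by_cases hk : IsKing σ <;> by_cases h0 : ev σ 0 = 0 <;> simp [e, hk, h0, NoStart]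

open Polynomial in
noncomputable def G (v : ℚ[X]) : PowerSeries ℚ[X] := PowerSeries.mk (gc v)
open Polynomial in
noncomputable def Rs (v : ℚ[X]) : PowerSeries ℚ[X] := PowerSeries.mk (rc v)

open Polynomial in
theorem G_eq (v : ℚ[X]) :
    G v = G 0 + PowerSeries.X * (PowerSeries.C v * (G 0 * Rs v)) := by
  ext1 n
  cases n with
  | zero => simp [G, gc_zero]
  | succ n =>
    rw [map_add, PowerSeries.coeff_succ_X_mul, PowerSeries.coeff_C_mul, PowerSeries.coeff_mul]
    simp only [G, Rs, PowerSeries.coeff_mk]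
    rw [gc_succ, mul_sum]

open Polynomial in
theorem R_eq (v : ℚ[X]) :
    G v = Rs v + PowerSeries.X * (PowerSeries.C v * Rs v) := by
  ext1 n
  cases n with
  | zero => simp [G, Rs, gc_zero, rc_zero]
  | succ n =>
    rw [map_add, PowerSeries.coeff_succ_X_mul, PowerSeries.coeff_C_mul]
    simp only [G, Rs, PowerSeries.coeff_mk]
    rw [rc_succ]

theorem Atu_eq : Atu = G Polynomial.X := rfl

theorem kingAu_eq : kingAu = G 1 := by
  classical
  unfold kingAu G
  congr 1
  funext n
  unfold gc kingCount
  rw [Nat.card_eq_fintype_card, Fintype.card_subtype]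
  simp

theorem statement_4 :
    (1 + PowerSeries.X * (1 + U + U * PowerSeries.X)
        + PowerSeries.X * (1 - U) * kingAu) * Atu
      = (1 + U * PowerSeries.X) * (1 + PowerSeries.X) * kingAu := by
  rw [Atu_eq, kingAu_eq]
  have a1 := G_eq Polynomial.X
  have a2 := R_eq Polynomial.X
  have b1 := G_eq 1
  have b2 := R_eq 1
  rw [map_one, one_mul] at b1 b2
  change _ = _ + _ * (U * _) at a1
  change _ = _ + _ * (U * _) at a2
  generalize G Polynomial.X = g at *
  generalize G 1 = k at *
  generalize G 0 = f at *
  generalize Rs Polynomial.X = r at *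
  generalize Rs 1 = s at *
  generalize (PowerSeries.X : PowerSeries (Polynomial ℚ)) = t at *
  generalize U = u at *
  have A : g * (1 + u * t) = f * (1 + u * t) + f * u * t * g := by
    linear_combination (1 + u * t) * a1 - f * u * t * a2
  have B : k * (1 + t) = f * (1 + t) + f * t * k := by
    linear_combination (1 + t) * b1 - f * t * b2
  linear_combination (1 + t + t * k) * A - (1 + u * t + u * t * g) * B
end

section
/- Let sfp(σ) denote the number of strong fixed points of σ, and let B(t,u) = Σ_{n≥0} t^n Σ_{σ∈K_n, σ_1≠1} u^{sfp(σ)}, the distribution of strong fixed points over king permutations of length n that do not begin with the value 1 (the empty permutation contributes 1). Then (1 + t(1+u+ut) + t(1−u)·A(t))·B(t,u) = (1+t)·A(t), where A(t) is regarded as an element of ℚ[u][[t]] via the constant-polynomial embedding. -/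
-- `B(t,u) = Σ_{n≥0} t^n Σ_{σ∈K_n, σ_1≠1} u^{sfp(σ)}`: the distribution of strong
-- fixed points over king permutations not beginning with the smallest value.
open Classical in
noncomputable def Btu : PowerSeries (Polynomial ℚ) :=
  PowerSeries.mk fun n =>
    ∑ σ : Equiv.Perm (Fin n),
      if IsKing σ ∧ (∀ h : 0 < n, σ ⟨0, h⟩ ≠ ⟨0, h⟩) then
        (Polynomial.X : Polynomial ℚ) ^ sfp σ
      else 0

namespace KingSfp

open Finset Polynomial

/-- The direct sum `α ⊕ 1 ⊕ β`. -/
def comb {a b : ℕ} (α : Equiv.Perm (Fin a)) (β : Equiv.Perm (Fin b)) :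
    Equiv.Perm (Fin (a + 1 + b)) :=
  finSumFinEquiv.permCongr
    (Equiv.Perm.sumCongr (finSumFinEquiv.permCongr (Equiv.Perm.sumCongr α (1 : Equiv.Perm (Fin 1)))) β)

lemma comb_left {a b : ℕ} (α : Equiv.Perm (Fin a)) (β : Equiv.Perm (Fin b)) (i : Fin a) :
    comb α β (Fin.castAdd b (Fin.castAdd 1 i)) = Fin.castAdd b (Fin.castAdd 1 (α i)) := by
  simp [comb, Equiv.permCongr_apply]

lemma comb_mid {a b : ℕ} (α : Equiv.Perm (Fin a)) (β : Equiv.Perm (Fin b)) (i : Fin 1) :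
    comb α β (Fin.castAdd b (Fin.natAdd a i)) = Fin.castAdd b (Fin.natAdd a i) := by
  simp only [comb, Equiv.permCongr_apply, finSumFinEquiv_symm_apply_castAdd,
    Equiv.Perm.sumCongr_apply, Sum.map_inl, finSumFinEquiv_symm_apply_natAdd, Sum.map_inr,
    finSumFinEquiv_apply_left, finSumFinEquiv_apply_right, Equiv.Perm.one_apply]

lemma comb_right {a b : ℕ} (α : Equiv.Perm (Fin a)) (β : Equiv.Perm (Fin b)) (i : Fin b) :
    comb α β (Fin.natAdd (a + 1) i) = Fin.natAdd (a + 1) (β i) := by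
  simp [comb, Equiv.permCongr_apply]

lemma comb_lt {a b : ℕ} (α : Equiv.Perm (Fin a)) (β : Equiv.Perm (Fin b)) (i : ℕ)
    (h : i < a) (h' : i < a + 1 + b) : (comb α β ⟨i, h'⟩ : ℕ) = α ⟨i, h⟩ := by
  have := congrArg Fin.val (comb_left α β ⟨i, h⟩)
  exact this

lemma comb_eq {a b : ℕ} (α : Equiv.Perm (Fin a)) (β : Equiv.Perm (Fin b))
    (h' : a < a + 1 + b) : (comb α β ⟨a, h'⟩ : ℕ) = a := by
  have := congrArg Fin.val (comb_mid α β 0)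
  exact this

lemma comb_gt {a b : ℕ} (α : Equiv.Perm (Fin a)) (β : Equiv.Perm (Fin b)) (i : ℕ)
    (h : i < b) (h' : a + 1 + i < a + 1 + b) :
    (comb α β ⟨a + 1 + i, h'⟩ : ℕ) = a + 1 + β ⟨i, h⟩ := by
  have := congrArg Fin.val (comb_right α β ⟨i, h⟩)
  exact this

lemma comb_inj {a b : ℕ} {α α' : Equiv.Perm (Fin a)} {β β' : Equiv.Perm (Fin b)}
    (h : comb α β = comb α' β') : α = α' ∧ β = β' := by
  constructor
  · ext i
    have := congrArg (fun σ => (σ (Fin.castAdd b (Fin.castAdd 1 i)) : ℕ)) h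
    simp only [comb_left] at this
    exact this
  · ext i
    have := congrArg (fun σ => (σ (Fin.natAdd (a + 1) i) : ℕ)) h
    simp only [comb_right, Fin.val_natAdd] at this
    omega

lemma split2 {a b : ℕ} (σ : Equiv.Perm (Fin (a + b)))
    (h : ∀ i : Fin (a + b), (i : ℕ) < a → (σ i : ℕ) < a) :
    ∃ (α : Equiv.Perm (Fin a)) (β : Equiv.Perm (Fin b)),
      σ = finSumFinEquiv.permCongr (Equiv.Perm.sumCongr α β) := by
  have := Equiv.Perm.mem_sumCongrHom_range_of_perm_mapsTo_inl
    (σ := finSumFinEquiv.symm.permCongr σ) (by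
      rintro _ ⟨i, rfl⟩
      have hi := h (Fin.castAdd b i) i.2
      refine ⟨⟨_, hi⟩, ?_⟩
      rw [Equiv.permCongr_apply, Equiv.eq_symm_apply]
      ext
      simp)
  obtain ⟨⟨α, β⟩, hab⟩ := this
  refine ⟨α, β, ?_⟩
  have h2 : Equiv.Perm.sumCongr α β = finSumFinEquiv.symm.permCongr σ := hab
  rw [h2]
  ext i
  simp [Equiv.permCongr_apply]

lemma comb_surj {a b : ℕ} (σ : Equiv.Perm (Fin (a + 1 + b))) (ha : a < a + 1 + b)
    (hs : IsStrongFixedPoint σ ⟨a, ha⟩) : ∃ α β, σ = comb α β := by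
  -- the value at `a` is `a`
  have hinj := σ.injective
  have hle : (σ ⟨a, ha⟩ : ℕ) ≤ a := by
    have : #((Finset.Ioi (⟨a, ha⟩ : Fin (a+1+b))).image σ) ≤ #(Finset.Ioi (σ ⟨a, ha⟩)) := by
      apply Finset.card_le_card
      intro x hx
      simp only [Finset.mem_image, Finset.mem_Ioi] at hx ⊢
      obtain ⟨j, hj, rfl⟩ := hx
      exact hs.2 j hj
    rw [Finset.card_image_of_injective _ hinj, Fin.card_Ioi, Fin.card_Ioi] at this
    have := (σ ⟨a, ha⟩).2
    simp only at *
    omega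
  have hge : a ≤ (σ ⟨a, ha⟩ : ℕ) := by
    have : #((Finset.Iio (⟨a, ha⟩ : Fin (a+1+b))).image σ) ≤ #(Finset.Iio (σ ⟨a, ha⟩)) := by
      apply Finset.card_le_card
      intro x hx
      simp only [Finset.mem_image, Finset.mem_Iio] at hx ⊢
      obtain ⟨j, hj, rfl⟩ := hx
      exact hs.1 j hj
    rw [Finset.card_image_of_injective _ hinj, Fin.card_Iio, Fin.card_Iio] at this
    exact this
  have hv : (σ ⟨a, ha⟩ : ℕ) = a := le_antisymm hle hge
  have hlt : ∀ i : Fin (a + 1 + b), (i : ℕ) < a → (σ i : ℕ) < a := by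
    intro i hi
    have := hs.1 i hi
    rw [Fin.lt_def, hv] at this
    exact this
  obtain ⟨γ, β, hσ⟩ := split2 (a := a + 1) (b := b) σ (by
    intro i hi
    rcases Nat.lt_or_ge i a with h | h
    · have := hlt i h; omega
    · have : i = ⟨a, ha⟩ := by ext; simp only; omega
      rw [this, hv]; omega)
  have hγ : ∀ i : Fin (a + 1), (γ i : ℕ) = σ (Fin.castAdd b i) := by
    intro i
    rw [hσ]; simp [Equiv.permCongr_apply]
  obtain ⟨α, δ, hγ'⟩ := split2 (a := a) (b := 1) γ (by
    intro i hi
    rw [hγ]; exact hlt _ hi)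
  refine ⟨α, β, ?_⟩
  rw [hσ, hγ', Subsingleton.elim δ 1]
  rfl

lemma comb_sfp_mid {a b : ℕ} (α : Equiv.Perm (Fin a)) (β : Equiv.Perm (Fin b))
    (ha : a < a + 1 + b) : IsStrongFixedPoint (comb α β) ⟨a, ha⟩ := by
  constructor
  · rintro ⟨j, hj⟩ h
    have h : j < a := h
    rw [Fin.lt_def, comb_eq, comb_lt _ _ _ h]
    exact (α _).2
  · rintro ⟨j, hj⟩ h
    have h : a < j := h
    obtain ⟨k, rfl⟩ : ∃ k, j = a + 1 + k := ⟨j - (a + 1), by omega⟩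
    rw [Fin.lt_def, comb_eq, comb_gt _ _ _ (by omega)]
    omega

lemma comb_sfp_right {a b : ℕ} (α : Equiv.Perm (Fin a)) (β : Equiv.Perm (Fin b)) (k : Fin b) :
    IsStrongFixedPoint (comb α β) (Fin.natAdd (a + 1) k) ↔ IsStrongFixedPoint β k := by
  unfold IsStrongFixedPoint
  constructor
  · rintro ⟨h1, h2⟩
    constructor
    · intro j hj
      have := h1 (Fin.natAdd (a + 1) j) (by simpa using hj)
      rw [comb_right, comb_right] at this
      simpa using this
    · intro j hj
      have := h2 (Fin.natAdd (a + 1) j) (by simpa using hj)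
      rw [comb_right, comb_right] at this
      simpa using this
  · rintro ⟨h1, h2⟩
    constructor
    · rintro ⟨j, hj⟩ h
      have h : j < a + 1 + k := h
      rw [Fin.lt_def, comb_right]
      rcases lt_trichotomy j a with h' | h' | h'
      · rw [comb_lt _ _ _ h']
        have := (α ⟨j, h'⟩).2
        simp only [Fin.val_natAdd]; omega
      · subst h'
        rw [comb_eq]
        simp only [Fin.val_natAdd]; omega
      · obtain ⟨l, rfl⟩ : ∃ l, j = a + 1 + l := ⟨j - (a + 1), by omega⟩
        rw [comb_gt _ _ _ (by omega)]
        have := h1 ⟨l, by omega⟩ (by rw [Fin.lt_def]; simp only; omega)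
        rw [Fin.lt_def] at this
        simp only [Fin.val_natAdd]; omega
    · rintro ⟨j, hj⟩ h
      have h : a + 1 + k < j := h
      rw [Fin.lt_def, comb_right]
      obtain ⟨l, rfl⟩ : ∃ l, j = a + 1 + l := ⟨j - (a + 1), by omega⟩
      rw [comb_gt _ _ _ (by omega)]
      have := h2 ⟨l, by omega⟩ (by rw [Fin.lt_def]; simp only; omega)
      rw [Fin.lt_def] at this
      simp only [Fin.val_natAdd]; omega

/-- Number of strong fixed points after position `i`. -/
noncomputable def after {n : ℕ} (σ : Equiv.Perm (Fin n)) (i : Fin n) : ℕ :=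
  Nat.card {j : Fin n // IsStrongFixedPoint σ j ∧ i < j}

lemma comb_after {a b : ℕ} (α : Equiv.Perm (Fin a)) (β : Equiv.Perm (Fin b))
    (ha : a < a + 1 + b) : after (comb α β) ⟨a, ha⟩ = sfp β := by
  unfold after sfp
  symm
  refine Nat.card_eq_of_bijective
    (fun k => ⟨Fin.natAdd (a + 1) k.1, (comb_sfp_right α β k.1).2 k.2, ?_⟩) ⟨?_, ?_⟩
  · rw [Fin.lt_def]; simp only [Fin.val_natAdd]; omega
  · rintro ⟨k, hk⟩ ⟨l, hl⟩ h
    simpa using h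
  · rintro ⟨⟨j, hj⟩, h1, h2⟩
    have h2 : a < j := h2
    obtain ⟨l, rfl⟩ : ∃ l, j = a + 1 + l := ⟨j - (a + 1), by omega⟩
    exact ⟨⟨⟨l, by omega⟩, (comb_sfp_right α β ⟨l, by omega⟩).1 h1⟩, rfl⟩

def NotMin {b : ℕ} (β : Equiv.Perm (Fin b)) : Prop := ∀ h : 0 < b, β ⟨0, h⟩ ≠ ⟨0, h⟩

def NotMax {a : ℕ} (α : Equiv.Perm (Fin a)) : Prop :=
  ∀ h : 0 < a, α ⟨a - 1, by omega⟩ ≠ ⟨a - 1, by omega⟩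

lemma comb_king {a b : ℕ} (α : Equiv.Perm (Fin a)) (β : Equiv.Perm (Fin b)) :
    IsKing (comb α β) ↔ (IsKing α ∧ NotMax α) ∧ (IsKing β ∧ NotMin β) := by
  constructor
  · intro h
    refine ⟨⟨?_, ?_⟩, ?_, ?_⟩
    · rintro ⟨i, hi⟩ hi'
      have := h ⟨i, by omega⟩ (by simp only at *; omega)
      simp only at *
      rw [comb_lt _ _ _ hi, comb_lt _ _ _ hi'] at this
      exact this
    · intro h0 he
      have := h ⟨a - 1, by omega⟩ (by simp only; omega)
      have e : a - 1 + 1 = a := by omega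
      simp only [e] at this
      rw [comb_eq, comb_lt _ _ _ (by omega : a - 1 < a), he] at this
      simp only at this
      rw [lt_abs] at this
      omega
    · rintro ⟨i, hi⟩ hi'
      have := h ⟨a + 1 + i, by omega⟩ (by simp only at *; omega)
      simp only [add_assoc (a + 1) i 1] at *
      rw [comb_gt _ _ _ hi, comb_gt _ _ _ hi'] at this
      push_cast at this
      rwa [add_sub_add_left_eq_sub] at this
    · intro h0 he
      have := h ⟨a, by omega⟩ (by simp only; omega)
      have h3 := comb_gt α β 0 h0 (by omega)
      simp only [add_zero] at h3
      simp only at this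
      rw [comb_eq, h3, he] at this
      simp only at this
      rw [lt_abs] at this
      omega
  · rintro ⟨⟨h1, h2⟩, h3, h4⟩ ⟨i, hi⟩ hi'
    simp only at hi' ⊢
    rcases lt_trichotomy i a with h' | h' | h'
    · rcases Nat.lt_or_ge (i + 1) a with h'' | h''
      · rw [comb_lt _ _ _ h', comb_lt _ _ _ h'']
        exact h1 ⟨i, h'⟩ h''
      · obtain rfl : a = i + 1 := by omega
        rw [comb_eq, comb_lt _ _ _ h']
        have h5 := h2 (by omega)
        simp only [Nat.add_sub_cancel, ne_eq, Fin.ext_iff] at h5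
        have := (α ⟨i, h'⟩).2
        rw [lt_abs]; omega
    · subst h'
      have h0 : 0 < b := by omega
      have h5 := comb_gt α β 0 h0 (by omega)
      simp only [add_zero] at h5
      rw [comb_eq, h5]
      have h6 := h4 h0
      simp only [ne_eq, Fin.ext_iff] at h6
      rw [lt_abs]; omega
    · obtain ⟨l, rfl⟩ : ∃ l, i = a + 1 + l := ⟨i - (a + 1), by omega⟩
      simp only [add_assoc (a + 1) l 1] at *
      rw [comb_gt _ _ _ (by omega), comb_gt _ _ _ (by omega)]
      have := h3 ⟨l, by omega⟩ (by simp only; omega)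
      push_cast
      rwa [add_sub_add_left_eq_sub]

open Classical in
noncomputable def Bn (n : ℕ) : ℚ[X] :=
  ∑ σ : Equiv.Perm (Fin n), if IsKing σ ∧ NotMin σ then (X : ℚ[X]) ^ sfp σ else 0

open Classical in
noncomputable def Dn (n : ℕ) : ℚ[X] :=
  ∑ σ : Equiv.Perm (Fin n), if IsKing σ ∧ NotMax σ then (1 : ℚ[X]) else 0

open Classical in
noncomputable def Gn (n : ℕ) : ℚ[X] :=
  ∑ σ : Equiv.Perm (Fin n), if IsKing σ then (X : ℚ[X]) ^ sfp σ else 0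

open Classical in
lemma kingCount_eq (n : ℕ) : (kingCount n : ℚ[X]) =
    ∑ σ : Equiv.Perm (Fin n), if IsKing σ then (1 : ℚ[X]) else 0 := by
  rw [kingCount, Nat.card_eq_fintype_card, Fintype.card_subtype, Finset.sum_boole]

open Classical in
lemma core (a b n : ℕ) (i : Fin n) (hi : (i : ℕ) = a) (hn : n = a + 1 + b) :
    (∑ σ : Equiv.Perm (Fin n), if IsKing σ ∧ IsStrongFixedPoint σ i then
      (X : ℚ[X]) ^ after σ i else 0) = Dn a * Bn b := by
  subst hn
  obtain ⟨i, hi'⟩ := i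
  change i = a at hi
  subst hi
  rw [Dn, Bn, Finset.sum_mul_sum, ← Finset.sum_product']
  symm
  refine Finset.sum_of_injOn (fun p => comb p.1 p.2) ?_ (by simp [Set.MapsTo]) ?_ ?_
  · rintro ⟨α, β⟩ _ ⟨α', β'⟩ _ h
    obtain ⟨h1, h2⟩ := comb_inj h
    exact Prod.ext h1 h2
  · intro σ _ hσ
    rw [if_neg]
    rintro ⟨_, h⟩
    obtain ⟨α, β, rfl⟩ := comb_surj σ hi' h
    exact hσ ⟨(α, β), by simp, rfl⟩
  · rintro ⟨α, β⟩ _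
    simp only [comb_king, comb_after, comb_sfp_mid, and_true]
    by_cases h1 : IsKing α ∧ NotMax α <;> by_cases h2 : IsKing β ∧ NotMin β <;> simp [h1, h2]

lemma Dn_zero : Dn 0 = 1 := by
  unfold Dn
  rw [Fintype.sum_unique, if_pos]
  exact ⟨fun i => i.elim0, fun h => absurd h (by omega)⟩

lemma sfp_zero (σ : Equiv.Perm (Fin 0)) : sfp σ = 0 := by simp [sfp]

lemma Bn_zero : Bn 0 = 1 := by
  unfold Bn
  rw [Fintype.sum_unique, if_pos, sfp_zero, pow_zero]
  exact ⟨fun i => i.elim0, fun h => absurd h (by omega)⟩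

lemma Gn_zero : Gn 0 = 1 := by
  unfold Gn
  rw [Fintype.sum_unique, if_pos, sfp_zero, pow_zero]
  exact fun i => i.elim0

lemma kingCount_zero : (kingCount 0 : ℚ[X]) = 1 := by
  classical
  rw [kingCount_eq, Fintype.sum_unique, if_pos]
  exact fun i => i.elim0

lemma sfp_first {n : ℕ} (σ : Equiv.Perm (Fin (n + 1))) :
    IsStrongFixedPoint σ 0 ↔ ¬ NotMin σ := by
  have : ¬ NotMin σ ↔ σ 0 = 0 := by
    unfold NotMin
    push Not
    exact ⟨fun ⟨_, h⟩ => h, fun h => ⟨by omega, h⟩⟩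
  rw [this]
  constructor
  · intro h
    by_contra hne
    have h1 : σ.symm 0 ≠ 0 := fun h' => hne (by have := congrArg σ h'; simpa using this.symm)
    have := h.2 (σ.symm 0) (Fin.pos_iff_ne_zero.2 h1)
    simp at this
  · intro h
    refine ⟨fun j hj => absurd hj (by simp), fun j hj => ?_⟩
    rw [h, Fin.pos_iff_ne_zero]
    intro h'
    exact hj.ne' (σ.injective (h'.trans h.symm))

lemma sfp_last {n : ℕ} (σ : Equiv.Perm (Fin (n + 1))) :
    IsStrongFixedPoint σ (Fin.last n) ↔ ¬ NotMax σ := by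
  have : ¬ NotMax σ ↔ σ (Fin.last n) = Fin.last n := by
    unfold NotMax
    push Not
    exact ⟨fun ⟨_, h⟩ => h, fun h => ⟨by omega, h⟩⟩
  rw [this]
  constructor
  · intro h
    by_contra hne
    have h1 : σ.symm (Fin.last n) ≠ Fin.last n :=
      fun h' => hne (by have := congrArg σ h'; simpa using this.symm)
    have := h.1 (σ.symm (Fin.last n)) (Fin.lt_last_iff_ne_last.2 h1)
    simp only [Equiv.apply_symm_apply] at this
    exact absurd this (not_lt.2 (Fin.le_last _))
  · intro h
    refine ⟨fun j hj => ?_, fun j hj => absurd hj (not_lt.2 (Fin.le_last _))⟩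
    rw [h, Fin.lt_last_iff_ne_last]
    intro h'
    exact hj.ne (σ.injective (h'.trans h.symm))

lemma sum_pow_after {ι : Type*} [LinearOrder ι] (S : Finset ι) (u : ℚ[X]) :
    (u - 1) * ∑ i ∈ S, u ^ #{j ∈ S | i < j} = u ^ #S - 1 := by
  induction S using Finset.induction_on_min with
  | empty => simp
  | insert m S hm ih =>
    have hn : m ∉ S := fun h => lt_irrefl _ (hm m h)
    rw [Finset.sum_insert hn, Finset.card_insert_of_notMem hn, mul_add]
    have e1 : #{j ∈ insert m S | m < j} = #S := by
      congr 1
      ext j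
      simp only [Finset.mem_filter, Finset.mem_insert]
      constructor
      · rintro ⟨rfl | h, h'⟩
        · exact absurd h' (lt_irrefl _)
        · exact h
      · intro h; exact ⟨Or.inr h, hm j h⟩
    have e2 : ∑ i ∈ S, u ^ #{j ∈ insert m S | i < j} = ∑ i ∈ S, u ^ #{j ∈ S | i < j} := by
      refine Finset.sum_congr rfl fun i hi => ?_
      rw [Finset.filter_insert, if_neg (not_lt.2 (hm i hi).le)]
    rw [e1, e2, ih]
    ring

open Classical in
lemma pow_sfp {n : ℕ} (σ : Equiv.Perm (Fin n)) :
    (X : ℚ[X]) ^ sfp σ - 1 =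
      (X - 1) * ∑ i : Fin n, if IsStrongFixedPoint σ i then (X : ℚ[X]) ^ after σ i else 0 := by
  rw [← Finset.sum_filter]
  have := sum_pow_after (Finset.univ.filter fun i => IsStrongFixedPoint σ i) (X : ℚ[X])
  rw [sfp, Nat.card_eq_fintype_card, Fintype.card_subtype, ← this]
  congr 1
  refine Finset.sum_congr rfl fun i _ => ?_
  rw [after, Nat.card_eq_fintype_card, Fintype.card_subtype, Finset.filter_filter]

lemma after_zero {n : ℕ} (σ : Equiv.Perm (Fin (n + 1))) (h : IsStrongFixedPoint σ 0) :
    sfp σ = after σ 0 + 1 := by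
  classical
  rw [sfp, after, Nat.card_eq_fintype_card, Fintype.card_subtype, Nat.card_eq_fintype_card,
    Fintype.card_subtype, ← Finset.card_insert_of_notMem (a := (0 : Fin (n + 1))) (by simp)]
  congr 1
  ext j
  simp only [Finset.mem_filter, Finset.mem_univ, true_and, Finset.mem_insert, Fin.pos_iff_ne_zero]
  constructor
  · intro h; tauto
  · rintro (rfl | h')
    · exact h
    · exact h'.1

lemma after_last {n : ℕ} (σ : Equiv.Perm (Fin (n + 1))) : after σ (Fin.last n) = 0 := by
  rw [after, Nat.card_eq_zero]
  left
  exact ⟨fun ⟨j, _, h⟩ => absurd h (not_lt.2 (Fin.le_last _))⟩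

lemma Gn_succ (n : ℕ) : Gn (n + 1) = Bn (n + 1) + X * Bn n := by
  classical
  have h := core 0 n (n + 1) 0 rfl (by omega)
  rw [Dn_zero, one_mul] at h
  rw [← h, Gn, Bn, Finset.mul_sum, ← Finset.sum_add_distrib]
  refine Finset.sum_congr rfl fun σ _ => ?_
  by_cases hk : IsKing σ <;> by_cases hm : NotMin σ
  · simp [hk, hm, sfp_first]
  · simp only [hk, hm, sfp_first, not_false_eq_true, and_self, if_true, and_false, if_false,
      zero_add, after_zero σ ((sfp_first σ).2 hm), pow_succ']
  · simp [hk]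
  · simp [hk]

lemma kingCount_succ (n : ℕ) : (kingCount (n + 1) : ℚ[X]) = Dn (n + 1) + Dn n := by
  classical
  have h := core n 0 (n + 1) (Fin.last n) rfl (by omega)
  rw [Bn_zero, mul_one] at h
  rw [← h, kingCount_eq, Dn, ← Finset.sum_add_distrib]
  refine Finset.sum_congr rfl fun σ _ => ?_
  by_cases hk : IsKing σ <;> by_cases hm : NotMax σ <;> simp [hk, hm, sfp_last, after_last]

lemma Gn_sub (n : ℕ) : Gn (n + 1) - (kingCount (n + 1) : ℚ[X]) =
    (X - 1) * ∑ p ∈ Finset.HasAntidiagonal.antidiagonal n, Dn p.1 * Bn p.2 := by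
  classical
  rw [Finset.Nat.sum_antidiagonal_eq_sum_range_succ (fun a b => Dn a * Bn b),
    ← Fin.sum_univ_eq_sum_range (fun k => Dn k * Bn (n - k)) (n + 1)]
  have : ∀ i : Fin (n + 1), Dn i * Bn (n - i) = _ := fun i =>
    (core i (n - i) (n + 1) i rfl (by omega)).symm
  simp only [this]
  rw [Finset.sum_comm, kingCount_eq, Gn, ← Finset.sum_sub_distrib, Finset.mul_sum]
  refine Finset.sum_congr rfl fun σ _ => ?_
  by_cases hk : IsKing σ
  · simp only [hk, if_true, true_and]
    exact pow_sfp σ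
  · simp [hk]

noncomputable def D : PowerSeries ℚ[X] := PowerSeries.mk Dn
noncomputable def G : PowerSeries ℚ[X] := PowerSeries.mk Gn

lemma Btu_eq : Btu = PowerSeries.mk Bn := by
  ext1 n
  simp only [Btu, PowerSeries.coeff_mk, Bn]
  refine Finset.sum_congr rfl fun σ _ => ?_
  by_cases h : IsKing σ ∧ NotMin σ
  · rw [if_pos h]; exact if_pos h
  · rw [if_neg h]; exact if_neg h

lemma series_A : kingAu = D + PowerSeries.X * D := by
  ext1 n
  cases n with
  | zero => simp [kingAu, D, kingCount_zero, Dn_zero]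
  | succ n => rw [map_add, PowerSeries.coeff_succ_X_mul]; simp [kingAu, D, kingCount_succ]

lemma series_G : G = Btu + PowerSeries.X * (U * Btu) := by
  rw [Btu_eq, U]
  ext1 n
  cases n with
  | zero => simp [G, Bn_zero, Gn_zero]
  | succ n =>
    rw [map_add, PowerSeries.coeff_succ_X_mul, PowerSeries.coeff_C_mul]; simp [G, Gn_succ]

lemma series_sub : G - kingAu = PowerSeries.X * ((U - 1) * (D * Btu)) := by
  have hU : U - 1 = PowerSeries.C (R := ℚ[X]) (X - 1) := by simp [U]
  rw [Btu_eq, hU]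
  ext1 n
  cases n with
  | zero => simp [G, kingAu, kingCount_zero, Gn_zero]
  | succ n =>
    rw [PowerSeries.coeff_succ_X_mul, PowerSeries.coeff_C_mul, PowerSeries.coeff_mul]
    simp only [G, kingAu, D, map_sub, PowerSeries.coeff_mk]
    exact Gn_sub n

end KingSfp

theorem statement_5 :
    (1 + PowerSeries.X * (1 + U + U * PowerSeries.X)
        + PowerSeries.X * (1 - U) * kingAu) * Btu
      = (1 + PowerSeries.X) * kingAu := by
  have h1 := KingSfp.series_A
  have h2 := KingSfp.series_G
  have h3 := KingSfp.series_sub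
  linear_combination (1 + PowerSeries.X) * h3 - (1 + PowerSeries.X) * h2
    + PowerSeries.X * (1 - U) * Btu * h1
end
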